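/- Fix integers d ≥ 1 and p ≥ 1, let σ satisfy Assumption A, and fix ε > 0. Then the matrix Φ(ε) is positive definite; equivalently, the functions (w, b) ↦ φ̂_{w,b}(T), for T ∈ ℕ^d_{≤p}, are linearly independent in L²(ℝ^d × ℝ, N(0, ε I_d) ⊗ N(0, ε)). -/

import Mathlib

open MeasureTheory ProbabilityTheory

/-- The standard Gaussian measure `N(0, I_d)` on `ℝ^d`. -/
noncomputable def gaussD (d : ℕ) : Measure (Fin d → ℝ) :=
  Measure.pi fun _ => gaussianReal 0 1

/-- The normalized (probabilists') Hermite polynomial `H_t = He_t / √(t!)` evaluated at `y`. -/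
noncomputable def hermN (t : ℕ) (y : ℝ) : ℝ :=
  (Polynomial.aeval y (Polynomial.hermite t)) / Real.sqrt (Nat.factorial t)

/-- The multivariate Hermite polynomial `χ_T(x) = ∏ i, H_{T i}(x i)`. -/
noncomputable def chiH {d : ℕ} (T : Fin d → ℕ) (x : Fin d → ℝ) : ℝ :=
  ∏ i, hermN (T i) (x i)

/-- The Hermite coefficient `φ̂_{w,b}(T) = ∫ σ(⟨w,x⟩ + b) χ_T(x) dγ_d(x)`
of the random feature `φ_{w,b}(x) = σ(⟨w,x⟩ + b)`. -/
noncomputable def phiHat (d : ℕ) (σ : ℝ → ℝ) (w : Fin d → ℝ) (b : ℝ)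
    (T : Fin d → ℕ) : ℝ :=
  ∫ x, σ (∑ i, w i * x i + b) * chiH T x ∂(gaussD d)

/-- The law of a feature pair `(w, b)` with `w ∼ N(0, v I_d)` and `b ∼ N(0, v)` independent. -/
noncomputable def featMeas (d : ℕ) (v : NNReal) : Measure ((Fin d → ℝ) × ℝ) :=
  (Measure.pi fun _ : Fin d => gaussianReal 0 v).prod (gaussianReal 0 v)

/-- The index set `ℕ^d_{≤p}` of multi-indices of total degree at most `p`
(each coordinate then being at most `p`, so we may record it in `Fin (p+1)`). -/
abbrev MIdx (d p : ℕ) := {T : Fin d → Fin (p + 1) // (∑ i, (T i : ℕ)) ≤ p}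

/-- The multi-index in `ℕ^d` corresponding to an element of `MIdx d p`. -/
def MIdx.toFun {d p : ℕ} (T : MIdx d p) : Fin d → ℕ := fun i => (T.1 i : ℕ)

/-- The matrix `Φ(ε)` with entries `Φ(ε)_{T,T'} = E_{w,b}[φ̂_{w,b}(T) φ̂_{w,b}(T')]`,
where `w ∼ N(0, ε I_d)` and `b ∼ N(0, ε)` are independent. -/
noncomputable def PhiMat (d p : ℕ) (σ : ℝ → ℝ) (ε : ℝ) :
    Matrix (MIdx d p) (MIdx d p) ℝ := fun T T' =>
  ∫ wb : (Fin d → ℝ) × ℝ,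
    phiHat d σ wb.1 wb.2 T.toFun * phiHat d σ wb.1 wb.2 T'.toFun
      ∂(featMeas d ε.toNNReal)

/-!
Suppose a linear combination `q` of the `χ_T`, `|T| ≤ p`, satisfies `L (P (⟨w, x⟩ + b)) = 0` for all
`(w, b)`, where `L g = ∫ g q dγ` and `P` is the activation. The coefficient of `w ^ m` in
`L (P (⟨w, x⟩ + b))` is `L (x ^ m)` times a multinomial coefficient times the Taylor coefficient of
order `|m|` of `P` at `b`. When `|m| ≤ deg P`, that Taylor coefficient is nonzero for some `b`, so
`L` vanishes on all polynomials of degree at most `p`, in particular on `q` itself: `∫ q² dγ = 0`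
and `q = 0`. Hence the Hermite coefficients of the random feature are linearly independent
continuous functions of `(w, b)`, and `Φ(ε)` is their Gram matrix in `L²`.
-/

open scoped Polynomial ENNReal
open MvPolynomial

section LinearAlgebra

theorem linearIndependent_of_dual_triangular {R M κ : Type*} [CommRing R] [NoZeroDivisors R]
    [AddCommGroup M] [Module R M] [PartialOrder κ] {v : κ → M} (f : κ → Module.Dual R M)
    (hdiag : ∀ i, f i (v i) ≠ 0) (htri : ∀ i j, f i (v j) ≠ 0 → i ≤ j) :
    LinearIndependent R v := by
  classical
  rw [linearIndependent_iff']
  intro s c hsum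
  by_contra! hc
  have hne : (s.filter (c · ≠ 0)).Nonempty := by
    simpa only [Finset.Nonempty, Finset.mem_filter] using hc
  obtain ⟨i, hi⟩ := Finset.exists_maximal hne
  obtain ⟨his, hci⟩ := Finset.mem_filter.1 hi.prop
  have happly : ∑ j ∈ s, c j * f i (v j) = 0 := by
    simpa using congrArg (f i) hsum
  have hother : ∀ j ∈ s, j ≠ i → c j * f i (v j) = 0 := by
    intro j hj hji
    by_contra hmul
    have hij := htri i j (right_ne_zero_of_mul hmul)
    exact hji (hi.eq_of_le (Finset.mem_filter.2 ⟨hj, left_ne_zero_of_mul hmul⟩) hij).symm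
  rw [Finset.sum_eq_single_of_mem i his hother] at happly
  exact mul_ne_zero hci (hdiag i) happly

end LinearAlgebra

section ProductSequence

variable {ι R : Type*} [Fintype ι]

theorem prod_monomial_single [CommSemiring R] (f : ι → ℕ) (a : ι → R) :
    ∏ i, monomial (Finsupp.single i (f i)) (a i) =
      monomial (Finsupp.equivFunOnFinite.symm f) (∏ i, a i) := by
  have hsingle (i : ι) : monomial (Finsupp.single i (f i)) (a i) = C (a i) * X i ^ f i := by
    rw [C_mul_X_pow_eq_monomial]
  simp [hsingle, monomial_eq, Finset.prod_mul_distrib, Finsupp.prod_fintype]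

theorem coeff_prod_toMvPolynomial [CommSemiring R] (p : ι → R[X]) (m : ι →₀ ℕ) :
    (∏ i, (p i).toMvPolynomial i).coeff m = ∏ i, (p i).coeff (m i) := by
  classical
  have hexpand (i : ι) : (p i).toMvPolynomial i =
      ∑ j ∈ (p i).support, monomial (Finsupp.single i j) ((p i).coeff j) := by
    conv_lhs => rw [(p i).as_sum_support_C_mul_X_pow]
    simp [C_mul_X_pow_eq_monomial]
  simp only [hexpand, Finset.prod_univ_sum, prod_monomial_single, coeff_sum, coeff_monomial,
    Equiv.symm_apply_eq]
  rw [Finset.sum_ite_eq']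
  split_ifs with hm
  · rfl
  · obtain ⟨i, hi⟩ : ∃ i, (p i).coeff (m i) = 0 := by simpa using hm
    exact (Finset.prod_eq_zero (Finset.mem_univ i) hi).symm

/-- The tensor products `∏ᵢ S i (T i) (Xᵢ)` of univariate polynomial sequences `S i`, indexed by
multi-indices `T`. -/
noncomputable def prodSequence [CommSemiring R] (S : ι → Polynomial.Sequence R) (T : ι →₀ ℕ) :
    MvPolynomial ι R :=
  ∏ i, (S i (T i)).toMvPolynomial i

theorem le_of_coeff_prodSequence_ne_zero [CommSemiring R] (S : ι → Polynomial.Sequence R)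
    {T m : ι →₀ ℕ} (h : (prodSequence S T).coeff m ≠ 0) : m ≤ T := by
  rw [prodSequence, coeff_prod_toMvPolynomial] at h
  intro i
  have hi : (S i (T i)).coeff (m i) ≠ 0 := fun h0 => h (Finset.prod_eq_zero (Finset.mem_univ i) h0)
  simpa using Polynomial.le_natDegree_of_ne_zero hi

theorem totalDegree_prodSequence_le [CommSemiring R] (S : ι → Polynomial.Sequence R)
    (T : ι →₀ ℕ) : (prodSequence S T).totalDegree ≤ T.degree :=
  Finset.sup_le fun _ hm =>
    Finsupp.degree_mono (le_of_coeff_prodSequence_ne_zero S (mem_support_iff.1 hm))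

theorem linearIndependent_prodSequence [CommRing R] [IsDomain R] (S : ι → Polynomial.Sequence R) :
    LinearIndependent R (prodSequence S) := by
  refine linearIndependent_of_dual_triangular (lcoeff R) (fun T => ?_)
    fun m T => le_of_coeff_prodSequence_ne_zero S
  rw [lcoeff_apply, prodSequence, coeff_prod_toMvPolynomial, Finset.prod_ne_zero_iff]
  intro i _
  simpa using Polynomial.coeff_ne_zero_of_eq_degree ((S i).degree_eq (T i))

end ProductSequence

section Taylor

theorem exists_taylor_coeff_ne_zero {R : Type*} [CommRing R] [IsDomain R] [CharZero R]
    {P : R[X]} {n : ℕ} (hn : (n : WithBot ℕ) ≤ P.degree) :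
    ∃ b, (Polynomial.taylor b P).coeff n ≠ 0 := by
  have hP : P ≠ 0 := by
    rintro rfl
    simp at hn
  have hlead : (Polynomial.hasseDeriv n P).coeff (P.natDegree - n) ≠ 0 := by
    have hnP : n ≤ P.natDegree := Polynomial.le_natDegree_of_coe_le_degree hn
    simpa [Polynomial.hasseDeriv_coeff, Nat.sub_add_cancel hnP, hP] using
      (Nat.choose_pos hnP).ne'
  by_contra! h
  have hzero : Polynomial.hasseDeriv n P = 0 :=
    Polynomial.funext fun b => by simpa [Polynomial.taylor_coeff] using h b
  simp [hzero] at hlead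

end Taylor

section Ridge

variable {ι R : Type*}

theorem map_monomial_eq_mul [CommSemiring R] (L : MvPolynomial ι R →ₗ[R] R) (m : ι →₀ ℕ) (a : R) :
    L (monomial m a) = a * L (monomial m 1) := by
  rw [← smul_eq_mul, ← map_smul, smul_monomial, smul_eq_mul, mul_one]

variable [Fintype ι]

section CommSemiring

variable [CommSemiring R] (L : MvPolynomial ι R →ₗ[R] R)

/-- The ridge polynomial `Q(⟨w, X⟩)`; the bias `b` of a feature `P(⟨w, X⟩ + b)` enters as
`Q = Polynomial.taylor b P`. -/
noncomputable def ridge (Q : R[X]) (w : ι → R) : MvPolynomial ι R :=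
  Polynomial.aeval (∑ i, w i • X i) Q

theorem eval_ridge (Q : R[X]) (w x : ι → R) : eval x (ridge Q w) = Q.eval (∑ i, w i * x i) := by
  simp [ridge, ← coe_aeval_eq_eval, ← Polynomial.aeval_algHom_apply]

theorem sum_smul_X_pow [DecidableEq ι] (w : ι → R) (n : ℕ) :
    (∑ i, w i • X i : MvPolynomial ι R) ^ n =
      ∑ m ∈ Finset.univ.finsuppAntidiag n,
        monomial m (m.multinomial * m.prod fun i k => w i ^ k) := by
  ext m
  have hmem : m ∈ Finset.univ.finsuppAntidiag n ↔ m.sum (fun _ k => k) = n := by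
    simp [Finsupp.sum_fintype]
  simp [coeff_linearCombination_X_pow_of_fintype, coeff_sum, coeff_monomial, hmem]

open Classical in
/-- The polynomial in `w` whose value is `L (⟨w, X⟩ ^ n)`. -/
noncomputable def powMoment (n : ℕ) : MvPolynomial ι R :=
  ∑ m ∈ Finset.univ.finsuppAntidiag n, monomial m (m.multinomial * L (monomial m 1))

theorem eval_powMoment (n : ℕ) (w : ι → R) :
    eval w (powMoment L n) = L ((∑ i, w i • X i) ^ n) := by
  classical
  rw [powMoment, sum_smul_X_pow, map_sum, map_sum]
  refine Finset.sum_congr (by congr!) fun m _ => ?_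
  rw [eval_monomial, map_monomial_eq_mul L m (_ * _)]
  ring

theorem coeff_powMoment (n : ℕ) (m : ι →₀ ℕ) :
    (powMoment L n).coeff m =
      if m.degree = n then m.multinomial * L (monomial m 1) else 0 := by
  classical
  simp [powMoment, coeff_sum, coeff_monomial, Finsupp.degree_eq_sum]

theorem map_ridge (Q : R[X]) (w : ι → R) :
    L (ridge Q w) =
      ∑ n ∈ Finset.range (Q.natDegree + 1), Q.coeff n * eval w (powMoment L n) := by
  simp [ridge, Polynomial.aeval_eq_sum_range, eval_powMoment]

end CommSemiring

variable [CommRing R] [IsDomain R] [CharZero R]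

theorem map_monomial_eq_zero_of_forall_ridge {L : MvPolynomial ι R →ₗ[R] R} {Q : R[X]}
    (h : ∀ w, L (ridge Q w) = 0) {m : ι →₀ ℕ} (hm : Q.coeff m.degree ≠ 0) :
    L (monomial m 1) = 0 := by
  have hpoly : ∑ n ∈ Finset.range (Q.natDegree + 1), Q.coeff n • powMoment L n = 0 :=
    MvPolynomial.funext fun w => by simpa [map_ridge] using h w
  have hcoeff : Q.coeff m.degree * (m.multinomial * L (monomial m 1)) = 0 := by
    simpa [coeff_sum, coeff_powMoment, Nat.lt_succ_iff, Polynomial.le_natDegree_of_ne_zero hm]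
      using congrArg (coeff m) hpoly
  have hmult : (m.multinomial : R) ≠ 0 := Nat.cast_ne_zero.2 (Nat.multinomial_pos _ _).ne'
  simpa [hm, hmult] using hcoeff

theorem map_eq_zero_of_forall_ridge_taylor {L : MvPolynomial ι R →ₗ[R] R} {P : R[X]}
    (h : ∀ w b, L (ridge (Polynomial.taylor b P) w) = 0) {q : MvPolynomial ι R}
    (hq : (q.totalDegree : WithBot ℕ) ≤ P.degree) : L q = 0 := by
  rw [q.as_sum, map_sum]
  refine Finset.sum_eq_zero fun m hm => ?_
  have hdeg : (m.degree : WithBot ℕ) ≤ P.degree :=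
    (Nat.cast_le.2 (le_totalDegree hm)).trans hq
  obtain ⟨b, hb⟩ := exists_taylor_coeff_ne_zero hdeg
  rw [map_monomial_eq_mul, map_monomial_eq_zero_of_forall_ridge (h · b) hb, mul_zero]

end Ridge

section FunctionAlgebra

variable {ι R : Type*} [CommSemiring R]

theorem mvPolynomial_aeval_mem {A : Type*} [CommSemiring A] [Algebra R A] {𝒜 : Subalgebra R A}
    {a : ι → A} (ha : ∀ i, a i ∈ 𝒜) (q : MvPolynomial ι R) : aeval a q ∈ 𝒜 :=
  𝒜.mvPolynomial_aeval_coe (fun i => ⟨a i, ha i⟩) q ▸ Subtype.coe_prop _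

theorem mvPolynomial_aeval_fn_apply {Z : Type*} (f : ι → Z → R) (q : MvPolynomial ι R) (z : Z) :
    aeval f q z = eval (fun i => f i z) q := by
  simpa [coe_aeval_eq_eval] using comp_aeval_apply f (Pi.evalAlgHom R (fun _ => R) z) q

end FunctionAlgebra

section FeatureTransform

variable {ι R : Type*} [Fintype ι]

section CommSemiring

variable [CommSemiring R] (L : MvPolynomial ι R →ₗ[R] R) (P : R[X])

/-- The transform sending a polynomial `q` to the function `(w, b) ↦ L (P(⟨w, X⟩ + b) * q)`. When
`L` is integration against a measure, its values on an orthonormal system are the coefficients of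
the feature `x ↦ P(⟨w, x⟩ + b)`. -/
noncomputable def featureTransform : MvPolynomial ι R →ₗ[R] ((ι → R) × R → R) :=
  LinearMap.pi fun wb => L ∘ₗ LinearMap.mulLeft R (ridge (Polynomial.taylor wb.2 P) wb.1)

theorem featureTransform_apply (q : MvPolynomial ι R) (wb : (ι → R) × R) :
    featureTransform L P q wb = L (ridge (Polynomial.taylor wb.2 P) wb.1 * q) :=
  rfl

theorem featureTransform_eq_sum (q : MvPolynomial ι R) :
    featureTransform L P q = ∑ n ∈ Finset.range (P.natDegree + 1),
      Polynomial.aeval (Prod.snd : (ι → R) × R → R) (Polynomial.hasseDeriv n P) *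
        aeval (fun i (wb : (ι → R) × R) => wb.1 i) (powMoment (L ∘ₗ LinearMap.mulRight R q) n) := by
  ext wb
  have hridge := map_ridge (L ∘ₗ LinearMap.mulRight R q) (Polynomial.taylor wb.2 P) wb.1
  rw [LinearMap.comp_apply, LinearMap.mulRight_apply] at hridge
  simp only [featureTransform_apply, hridge, Polynomial.natDegree_taylor, Polynomial.taylor_coeff,
    Finset.sum_apply, Pi.mul_apply, Polynomial.aeval_fn_apply, Polynomial.coe_aeval_eq_eval,
    mvPolynomial_aeval_fn_apply]

theorem featureTransform_mem {𝒜 : Subalgebra R ((ι → R) × R → R)}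
    (hfst : ∀ i, (fun wb => wb.1 i) ∈ 𝒜) (hsnd : Prod.snd ∈ 𝒜) (q : MvPolynomial ι R) :
    featureTransform L P q ∈ 𝒜 := by
  rw [featureTransform_eq_sum]
  exact 𝒜.sum_mem fun n _ =>
    𝒜.mul_mem (𝒜.aeval_coe ⟨_, hsnd⟩ _ ▸ Subtype.coe_prop _) (mvPolynomial_aeval_mem hfst _)

theorem continuous_featureTransform [TopologicalSpace R] [IsTopologicalSemiring R]
    (q : MvPolynomial ι R) : Continuous (featureTransform L P q) :=
  featureTransform_mem L P (𝒜 := continuousSubalgebra)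
    (fun i => (continuous_apply i).comp continuous_fst) continuous_snd q

end CommSemiring

variable [CommRing R] [IsDomain R] [CharZero R] {L : MvPolynomial ι R →ₗ[R] R} {P : R[X]} {n : ℕ}

theorem disjoint_restrictTotalDegree_ker_featureTransform (hL : ∀ q, L (q * q) = 0 → q = 0)
    (hn : (n : WithBot ℕ) ≤ P.degree) :
    Disjoint (restrictTotalDegree ι R n) (LinearMap.ker (featureTransform L P)) := by
  rw [Submodule.disjoint_def]
  intro q hq hker
  rw [mem_restrictTotalDegree] at hq
  exact hL q (map_eq_zero_of_forall_ridge_taylor (L := L ∘ₗ LinearMap.mulRight R q)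
    (fun w b => congrFun hker (w, b)) ((Nat.cast_le.2 hq).trans hn))

theorem linearIndependent_featureTransform_prodSequence {κ : Type*}
    (hL : ∀ q, L (q * q) = 0 → q = 0) (hn : (n : WithBot ℕ) ≤ P.degree)
    (S : ι → Polynomial.Sequence R) {T : κ → ι →₀ ℕ} (hT : T.Injective)
    (hTn : ∀ k, (T k).degree ≤ n) :
    LinearIndependent R fun k => featureTransform L P (prodSequence S (T k)) := by
  refine ((linearIndependent_prodSequence S).comp T hT).map
    ((disjoint_restrictTotalDegree_ker_featureTransform hL hn).mono_left ?_)
  rw [Submodule.span_le]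
  rintro _ ⟨k, rfl⟩
  exact (mem_restrictTotalDegree ..).2 ((totalDegree_prodSequence_le S _).trans (hTn k))

end FeatureTransform

section Gram

variable {X κ : Type*} [TopologicalSpace X] [MeasurableSpace X] {μ : Measure X}
  [μ.IsOpenPosMeasure]

theorem linearIndependent_toLp {E : Type*} [NormedAddCommGroup E] [NormedSpace ℝ E]
    {f : κ → X → E} {p : ℝ≥0∞} (hcont : ∀ k, Continuous (f k)) (hLp : ∀ k, MemLp (f k) p μ)
    (hf : LinearIndependent ℝ f) : LinearIndependent ℝ fun k => (hLp k).toLp (f k) := by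
  rw [linearIndependent_iff'] at hf ⊢
  intro s c hc
  refine hf s c ?_
  have hmk (k : κ) : ⇑(c k • (hLp k).toLp (f k)) =ᵐ[μ] c k • f k :=
    (Lp.coeFn_smul _ _).trans ((hLp k).coeFn_toLp.const_smul _)
  have hae : ∑ k ∈ s, c k • f k =ᵐ[μ] 0 := by
    have hzero : ∑ k ∈ s, ⇑(c k • (hLp k).toLp (f k)) =ᵐ[μ] 0 := by
      grw [← Lp.coeFn_finsetSum, hc, Lp.coeFn_zero]
    exact (eventuallyEq_sum fun k _ => hmk k).symm.trans hzero
  have hcontsum : Continuous (∑ k ∈ s, c k • f k) := by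
    rw [Finset.sum_fn]
    fun_prop
  exact (hcontsum.ae_eq_iff_eq μ continuous_zero).1 hae

theorem posDef_integral_mul [Finite κ] {f : κ → X → ℝ} (hcont : ∀ k, Continuous (f k))
    (hL2 : ∀ k, MemLp (f k) 2 μ) (hf : LinearIndependent ℝ f) :
    (Matrix.of fun k l => ∫ x, f k x * f l x ∂μ).PosDef := by
  have hgram : (Matrix.of fun k l => ∫ x, f k x * f l x ∂μ) =
      Matrix.gram ℝ fun k => (hL2 k).toLp (f k) := by
    ext k l
    rw [Matrix.gram_apply, L2.inner_def, Matrix.of_apply]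
    refine integral_congr_ae ?_
    filter_upwards [(hL2 k).coeFn_toLp, (hL2 l).coeFn_toLp] with x hk hl
    simp [hk, hl, mul_comm]
  rw [hgram]
  exact Matrix.posDef_gram_of_linearIndependent (linearIndependent_toLp hcont hL2 hf)

end Gram

section Moments

variable {Ω Ω' ι : Type*} [MeasurableSpace Ω] [MeasurableSpace Ω']

/-- The algebra `L^{∞-}` of functions with finite moments of all orders. -/
def finiteMomentSubalgebra (μ : Measure Ω) [IsFiniteMeasure μ] : Subalgebra ℝ (Ω → ℝ) where
  carrier := {f | ∀ p : ℝ≥0∞, p ≠ ∞ → MemLp f p μ}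
  add_mem' hf hg p hp := (hf p hp).add (hg p hp)
  mul_mem' {f g} hf hg p hp := by
    have h2p : 2 * p ≠ ∞ := ENNReal.mul_ne_top ENNReal.ofNat_ne_top hp
    have : ENNReal.HolderTriple (2 * p) (2 * p) p := ⟨by
      rw [ENNReal.mul_inv (.inl two_ne_zero) (.inl ENNReal.ofNat_ne_top), ← add_mul,
        ENNReal.inv_two_add_inv_two, one_mul]⟩
    exact (hg _ h2p).mul (hf _ h2p)
  algebraMap_mem' c p _ := memLp_const c

theorem comp_mem_finiteMomentSubalgebra {μ : Measure Ω} {ν : Measure Ω'} [IsFiniteMeasure μ]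
    [IsFiniteMeasure ν] {f : Ω' → ℝ} (hf : f ∈ finiteMomentSubalgebra ν) {g : Ω → Ω'}
    (hg : MeasurePreserving g μ ν) : f ∘ g ∈ finiteMomentSubalgebra μ :=
  fun p hp => (hf p hp).comp_measurePreserving hg

theorem integrable_eval_of_mem_finiteMomentSubalgebra {μ : Measure (ι → ℝ)} [IsFiniteMeasure μ]
    (hμ : ∀ i, (fun x => x i) ∈ finiteMomentSubalgebra μ) (q : MvPolynomial ι ℝ) :
    Integrable (fun x => eval x q) μ := by
  have hLp := mvPolynomial_aeval_mem hμ q 1 ENNReal.one_ne_top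
  exact memLp_one_iff_integrable.1 (hLp.ae_eq (.of_forall (mvPolynomial_aeval_fn_apply _ q)))

/-- Integration of polynomials against a measure with finite moments, as a linear functional. -/
noncomputable def polyIntegral {μ : Measure (ι → ℝ)}
    (hμ : ∀ q : MvPolynomial ι ℝ, Integrable (fun x => eval x q) μ) :
    MvPolynomial ι ℝ →ₗ[ℝ] ℝ where
  toFun q := ∫ x, eval x q ∂μ
  map_add' q r := by simpa only [map_add] using integral_add (hμ q) (hμ r)
  map_smul' c q := by simpa [smul_eval] using integral_const_mul c fun x => eval x q

theorem eq_zero_of_polyIntegral_mul_self_eq_zero {μ : Measure (ι → ℝ)} [μ.IsOpenPosMeasure]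
    {hμ : ∀ q : MvPolynomial ι ℝ, Integrable (fun x => eval x q) μ} {q : MvPolynomial ι ℝ}
    (h : polyIntegral hμ (q * q) = 0) : q = 0 := by
  refine MvPolynomial.funext fun x => ?_
  rw [map_zero]
  by_contra hx
  have hpos : 0 < polyIntegral hμ (q * q) :=
    integral_pos_of_integrable_nonneg_nonzero (x := x) (continuous_eval _) (hμ _)
      (fun y => by simpa using mul_self_nonneg (eval y q)) (by simpa using hx)
  exact hpos.ne' h

end Moments

section Hermite

/-- The normalized probabilists' Hermite polynomials `He_t / √(t!)`. -/
noncomputable def normalizedHermite : Polynomial.Sequence ℝ where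
  elems' t := Polynomial.C (√(t.factorial : ℝ))⁻¹ *
    (Polynomial.hermite t).map (Int.castRingHom ℝ)
  degree_eq' t := by
    rw [Polynomial.degree_C_mul (by positivity),
      (Polynomial.hermite_monic t).degree_map, Polynomial.degree_hermite]

theorem eval_normalizedHermite (t : ℕ) (y : ℝ) : (normalizedHermite t).eval y = hermN t y := by
  change (Polynomial.C _ * _).eval y = _
  rw [Polynomial.eval_C_mul, Polynomial.eval_map, hermN, Polynomial.aeval_def, div_eq_inv_mul]
  rfl

theorem eval_prodSequence_normalizedHermite {d : ℕ} (T : Fin d →₀ ℕ) (x : Fin d → ℝ) :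
    eval x (prodSequence (fun _ => normalizedHermite) T) = chiH T x := by
  simp [prodSequence, chiH, eval_toMvPolynomial, eval_normalizedHermite]

end Hermite

section Gaussian

theorem isOpenPosMeasure_gaussianReal (m : ℝ) {v : NNReal} (hv : v ≠ 0) :
    (gaussianReal m v).IsOpenPosMeasure :=
  (gaussianReal_absolutelyContinuous' m hv).isOpenPosMeasure

theorem id_mem_finiteMomentSubalgebra_gaussianReal (m : ℝ) (v : NNReal) :
    id ∈ finiteMomentSubalgebra (gaussianReal m v) :=
  fun p hp => memLp_id_gaussianReal' p hp

theorem apply_mem_finiteMomentSubalgebra_pi_gaussianReal {ι : Type*} [Fintype ι] (m : ι → ℝ)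
    (v : ι → NNReal) (i : ι) :
    (fun x => x i) ∈ finiteMomentSubalgebra (Measure.pi fun j => gaussianReal (m j) (v j)) :=
  comp_mem_finiteMomentSubalgebra (id_mem_finiteMomentSubalgebra_gaussianReal (m i) (v i))
    (measurePreserving_eval _ i)

instance isOpenPosMeasure_gaussD (d : ℕ) : (gaussD d).IsOpenPosMeasure := by
  have := isOpenPosMeasure_gaussianReal 0 one_ne_zero
  unfold gaussD
  infer_instance

theorem integrable_eval_gaussD {d : ℕ} (q : MvPolynomial (Fin d) ℝ) :
    Integrable (fun x => eval x q) (gaussD d) :=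
  integrable_eval_of_mem_finiteMomentSubalgebra
    (apply_mem_finiteMomentSubalgebra_pi_gaussianReal (fun _ => 0) fun _ => 1) q

instance isProbabilityMeasure_featMeas (d : ℕ) (v : NNReal) :
    IsProbabilityMeasure (featMeas d v) := by
  unfold featMeas
  infer_instance

theorem isOpenPosMeasure_featMeas (d : ℕ) {v : NNReal} (hv : v ≠ 0) :
    (featMeas d v).IsOpenPosMeasure := by
  have := isOpenPosMeasure_gaussianReal 0 hv
  unfold featMeas
  infer_instance

theorem featureTransform_mem_finiteMomentSubalgebra {d : ℕ} (L : MvPolynomial (Fin d) ℝ →ₗ[ℝ] ℝ)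
    (P : ℝ[X]) (v : NNReal) (q : MvPolynomial (Fin d) ℝ) :
    featureTransform L P q ∈ finiteMomentSubalgebra (featMeas d v) :=
  featureTransform_mem L P
    (fun i => comp_mem_finiteMomentSubalgebra
      (apply_mem_finiteMomentSubalgebra_pi_gaussianReal (fun _ => 0) (fun _ => v) i)
      measurePreserving_fst)
    (comp_mem_finiteMomentSubalgebra (id_mem_finiteMomentSubalgebra_gaussianReal 0 v)
      measurePreserving_snd) q

end Gaussian

section RandomFeatures

variable {d p : ℕ}

namespace MIdx

/-- The multi-index of `T : MIdx d p` as the exponent of a monomial. -/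
noncomputable def toFinsupp (T : MIdx d p) : Fin d →₀ ℕ :=
  Finsupp.equivFunOnFinite.symm T.toFun

theorem toFinsupp_injective : Function.Injective (toFinsupp : MIdx d p → Fin d →₀ ℕ) := by
  refine Finsupp.equivFunOnFinite.symm.injective.comp fun T T' h => ?_
  ext i
  exact congrFun h i

theorem degree_toFinsupp_le (T : MIdx d p) : T.toFinsupp.degree ≤ p := by
  rw [Finsupp.degree_eq_sum]
  exact T.2

end MIdx

theorem phiHat_eq_featureTransform (P : ℝ[X]) (w : Fin d → ℝ) (b : ℝ) (T : Fin d →₀ ℕ) :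
    phiHat d (fun y => P.eval y) w b T =
      featureTransform (polyIntegral integrable_eval_gaussD) P
        (prodSequence (fun _ => normalizedHermite) T) (w, b) := by
  refine integral_congr_ae (.of_forall fun x => ?_)
  simp [eval_ridge, Polynomial.taylor_eval, eval_prodSequence_normalizedHermite]

end RandomFeatures

theorem stmt3_general (d p : ℕ) (P : ℝ[X]) (hP : (p : WithBot ℕ) ≤ P.degree) (ε : ℝ)
    (hε : 0 < ε) :
    (PhiMat d p (fun y => P.eval y) ε).PosDef ∧
      LinearIndependent ℝ
        (fun (T : MIdx d p) => fun wb : (Fin d → ℝ) × ℝ =>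
          phiHat d (fun y => P.eval y) wb.1 wb.2 T.toFun) := by
  have hphi : (fun (T : MIdx d p) (wb : (Fin d → ℝ) × ℝ) =>
      phiHat d (fun y => P.eval y) wb.1 wb.2 T.toFun) = fun T =>
        featureTransform (polyIntegral integrable_eval_gaussD) P
          (prodSequence (fun _ => normalizedHermite) T.toFinsupp) :=
    funext₂ fun T wb => phiHat_eq_featureTransform P wb.1 wb.2 T.toFinsupp
  have hind : LinearIndependent ℝ fun (T : MIdx d p) (wb : (Fin d → ℝ) × ℝ) =>
      phiHat d (fun y => P.eval y) wb.1 wb.2 T.toFun :=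
    hphi ▸ linearIndependent_featureTransform_prodSequence
      (fun _ => eq_zero_of_polyIntegral_mul_self_eq_zero) hP _ MIdx.toFinsupp_injective
      MIdx.degree_toFinsupp_le
  have := isOpenPosMeasure_featMeas d (Real.toNNReal_pos.2 hε).ne'
  refine ⟨posDef_integral_mul (fun T => ?_) (fun T => ?_) hind, hind⟩
  · exact congrFun hphi T ▸ continuous_featureTransform _ P _
  · exact congrFun hphi T ▸
      featureTransform_mem_finiteMomentSubalgebra _ P _ _ 2 ENNReal.ofNat_ne_top

/-- for a polynomial activation σ of degree p with all coefficients nonzero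
(Assumption A) and any ε > 0, the matrix Φ(ε) is positive definite; equivalently, the
functions (w,b) ↦ φ̂_{w,b}(T), T ∈ ℕ^d_{≤p}, are linearly independent. -/
theorem stmt3 (d p : ℕ) (hd : 1 ≤ d) (hp : 1 ≤ p)
    (σ : ℝ → ℝ) (cf : Fin (p + 1) → ℝ) (hcf : ∀ k, cf k ≠ 0)
    (hσ : ∀ y, σ y = ∑ k : Fin (p + 1), cf k * y ^ (k : ℕ))
    (ε : ℝ) (hε : 0 < ε) :
    (PhiMat d p σ ε).PosDef ∧
      LinearIndependent ℝ
        (fun (T : MIdx d p) => fun wb : (Fin d → ℝ) × ℝ =>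
          phiHat d σ wb.1 wb.2 T.toFun) := by
  have hdeg : (p : WithBot ℕ) ≤ (Polynomial.ofFn (p + 1) cf).degree :=
    Polynomial.le_degree_of_ne_zero <| by
      rw [Polynomial.ofFn_coeff_eq_val_of_lt cf p.lt_succ_self]
      exact hcf (Fin.last p)
  have hσP : σ = fun y => (Polynomial.ofFn (p + 1) cf).eval y := by
    ext y
    simp [hσ, Polynomial.ofFn_eq_sum_monomial, Polynomial.eval_finsetSum]
  exact hσP ▸ stmt3_general d p _ hdeg ε hε
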